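/- (Equivalence of the fractional lower-bound program and its pruned linear reformulation) Suppose the feasible set F = { q: R → ℝ_{≥0} : Σ_{r ∈ R_{v_B.v_A}} q_r = p_{v_B.v_A} for all (v_A, v_B), and Σ_{r ∈ R_W} q_r > 0 } is nonempty. Then inf over q ∈ F of the ratio (Σ_{r ∈ R_Q ∩ R_W} q_r)/(Σ_{r ∈ R_W} q_r) equals the optimal value of the pruned LP: min{ Σ_{h ∈ H} d_h^L q_h : Σ_{h ∈ H: h(v_A)=v_B} q_h = α·p_{v_B.v_A} for all (v_A, v_B), Σ_{h ∈ H: R_h ⊆ R_W} q_h = 1, α ≥ 0, q ≥ 0 }, where d_h^L = 1{R_h ⊆ R_Q}·1{R_h ⊆ R_W}. -/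

import Mathlib

open Classical

/-- A partitioned causal graph on binary variables `V_0, …, V_{n-1}`, listed in
topologically sorted order.  Indices `< a` form the index set `A` (context
variables, which have no parents and topologically precede the rest), indices
`≥ a` form the index set `B`.  `parents j` is the set of indices of `pa(V_j)`. -/
structure CausalGraph where
  n : ℕ
  a : ℕ
  a_le : a ≤ n
  parents : Fin n → Finset (Fin n)
  sorted : ∀ j i : Fin n, i ∈ parents j → i < j
  noParentsA : ∀ j : Fin n, j.val < a → parents j = ∅

namespace CausalGraph

variable (G : CausalGraph)

/-- Indices of the `A` (context) variables. -/
abbrev AIdx := {i : Fin G.n // i.val < G.a}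

/-- Indices of the `B` variables. -/
abbrev BIdx := {i : Fin G.n // G.a ≤ i.val}

/-- Assignments of binary values to the `A` variables (`{0,1}^{|A|}`). -/
abbrev AAssign := G.AIdx → Bool

/-- Assignments of binary values to the `B` variables (`{0,1}^{|B|}`). -/
abbrev BAssign := G.BIdx → Bool

/-- A family of candidate response functions, one for each node, each reading a
full assignment of all variables. -/
abbrev Resp := Fin G.n → ((Fin G.n → Bool) → Bool)

/-- A response family is admissible when each component depends only on the
values of the parents of the corresponding node.  This encodes membership in
`R = ∏_{j∈B} F_j`, where `F_j` is the set of ALL functions from values of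
`pa(V_j)` to `{0,1}`. -/
def IsResponse (r : G.Resp) : Prop :=
  ∀ j : Fin G.n, ∀ v w : Fin G.n → Bool, (∀ i ∈ G.parents j, v i = w i) → r j v = r j w

/-- The response-function set `R`. -/
def R : Set G.Resp := {r | G.IsResponse r}

/-- One step of evaluation: `A` variables read the context, `B` variables apply
their response functions to the current assignment. -/
def evalStep (r : G.Resp) (vA : G.AAssign) (v : Fin G.n → Bool) : Fin G.n → Bool :=
  fun j => if h : j.val < G.a then vA ⟨j, h⟩ else r j v

/-- Evaluation of all variables from the context `vA` and the response family
`r`, in topological order (realized by `n`-fold iteration of `evalStep`, which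
is exact since each parent index precedes its child's index). -/
def eval (r : G.Resp) (vA : G.AAssign) : Fin G.n → Bool :=
  (G.evalStep r vA)^[G.n] (fun _ => false)

/-- `F_B(v_A, r)`: the values of the `B` variables determined by `v_A` and `r`. -/
def FB (r : G.Resp) (vA : G.AAssign) : G.BAssign := fun j => G.eval r vA j.1

/-- A hyperarc `h : {0,1}^{|A|} → {0,1}^{|B|}`. -/
abbrev Hyperarc := G.AAssign → G.BAssign

/-- `R_h`: the admissible responses consistent with hyperarc `h` on every input. -/
def Rh (h : G.Hyperarc) : Set G.Resp :=
  {r ∈ G.R | ∀ vA : G.AAssign, G.FB r vA = h vA}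

/-- A hyperarc is valid when `R_h ≠ ∅`. -/
def Valid (h : G.Hyperarc) : Prop := (G.Rh h).Nonempty

/-- The set `H` of valid hyperarcs. -/
def H : Set G.Hyperarc := {h | G.Valid h}

/-- `R_{v_B.v_A}`: responses mapping the context `v_A` to the values `v_B` of `V_B`. -/
def RvBvA (vA : G.AAssign) (vB : G.BAssign) : Set G.Resp :=
  {r ∈ G.R | G.FB r vA = vB}

/-- Restriction of a full assignment to the `A` variables. -/
def restrictA (v : Fin G.n → Bool) : G.AAssign := fun i => v i.1

/-- Restriction of a full assignment to the `B` variables. -/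
def restrictB (v : Fin G.n → Bool) : G.BAssign := fun j => v j.1

/-- The full assignment determined by a context `vA` and a hyperarc `h`. -/
def extendA (h : G.Hyperarc) (vA : G.AAssign) : Fin G.n → Bool :=
  fun i => if hi : i.val < G.a then vA ⟨i, hi⟩ else h vA ⟨i, not_lt.mp hi⟩

/-- One step of evaluation under the intervention `do(V_I = q_I)`: the
mechanisms of the intervened variables are ignored. -/
def evalDoStep (I : Finset (Fin G.n)) (qI : Fin G.n → Bool) (r : G.Resp)
    (qA : G.AAssign) (v : Fin G.n → Bool) : Fin G.n → Bool :=
  fun j => if h : j.val < G.a then qA ⟨j, h⟩ else if j ∈ I then qI j else r j v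

/-- Evaluation of all variables under the intervention `do(V_I = q_I)`,
in context `V_A = q_A`, using the response family `r`. -/
def evalDo (I : Finset (Fin G.n)) (qI : Fin G.n → Bool) (r : G.Resp)
    (qA : G.AAssign) : Fin G.n → Bool :=
  (G.evalDoStep I qI r qA)^[G.n] (fun _ => false)

/-- A causal query `P(V_O(V_I = q_I) = q_O | V_A = q_A)`: disjoint sets
`O, I ⊆ B` together with the values `q_A`, `q_I`, `q_O`. -/
structure Query (G : CausalGraph) where
  O : Finset (Fin G.n)
  I : Finset (Fin G.n)
  O_sub : ∀ j ∈ O, G.a ≤ j.val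
  I_sub : ∀ j ∈ I, G.a ≤ j.val
  disjOI : Disjoint O I
  qA : G.AAssign
  qI : Fin G.n → Bool
  qO : Fin G.n → Bool

/-- `R_Q`: the admissible responses consistent with the query, i.e. those with
`F_O((q_A, q_I), r) = q_O`. -/
def RQ (Q : G.Query) : Set G.Resp :=
  {r ∈ G.R | ∀ j ∈ Q.O, G.evalDo Q.I Q.qI r Q.qA j = Q.qO j}

/-- Edges of the mutilated graph `G^{do(V_I = q_I)}` (all edges into `V_I` deleted). -/
def doEdge (I : Finset (Fin G.n)) (i j : Fin G.n) : Prop := j ∉ I ∧ i ∈ G.parents j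

/-- `C(Q)`: the critical variables for the query, i.e. those with a directed
path to some variable of `V_O` in the mutilated graph `G^{do(V_I = q_I)}`. -/
def critical (Q : G.Query) : Set (Fin G.n) :=
  {i | ∃ o ∈ Q.O, Relation.ReflTransGen (G.doEdge Q.I) i o}

/-- An observation `{V_W = q_W}` with `W ⊆ B`, in context `V_A = q_A`. -/
structure Obs (G : CausalGraph) where
  W : Finset (Fin G.n)
  W_sub : ∀ j ∈ W, G.a ≤ j.val
  qA : G.AAssign
  qW : Fin G.n → Bool

/-- `R_W`: the admissible responses consistent with the observation, i.e. those
with `F_W(q_A, r) = q_W`. -/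
def RW (Ob : G.Obs) : Set G.Resp :=
  {r ∈ G.R | ∀ j ∈ Ob.W, G.eval r Ob.qA j = Ob.qW j}

/-- Edges of the causal graph `G` itself. -/
def edge (i j : Fin G.n) : Prop := i ∈ G.parents j

/-- `C(W)`: the critical variables for the observation: the `A`-variables with
a directed path in `G` to some variable of `V_W`. -/
def criticalW (Ob : G.Obs) : Set (Fin G.n) :=
  {i | i.val < G.a ∧ ∃ w ∈ Ob.W, Relation.ReflTransGen G.edge i w}

end CausalGraph

open CausalGraph

/-- The sum `Σ_{x ∈ s} f x` of `f` over a subset `s` of a finite type. -/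
noncomputable def setSum {α : Type*} [Fintype α] (s : Set α) (f : α → ℝ) : ℝ :=
  ∑ x : α, if x ∈ s then f x else 0

theorem setSum_mono {α : Type*} [Fintype α] {s t : Set α} {f : α → ℝ}
    (hf : ∀ x, 0 ≤ f x) (hst : s ⊆ t) : setSum s f ≤ setSum t f := by
  refine Finset.sum_le_sum fun x _ => ?_
  by_cases hs : x ∈ s
  · simp [hs, hst hs]
  · by_cases ht : x ∈ t <;> simp [hs, ht, hf x]

theorem setSum_nonneg {α : Type*} [Fintype α] (s : Set α) {f : α → ℝ}
    (hf : ∀ x, 0 ≤ f x) : 0 ≤ setSum s f :=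
  Finset.sum_nonneg fun x _ => by split_ifs <;> simp [hf x]

theorem setSum_div {α : Type*} [Fintype α] (s : Set α) (f : α → ℝ) (c : ℝ) :
    setSum s (fun x => f x / c) = setSum s f / c := by
  simp only [setSum, Finset.sum_div]
  refine Finset.sum_congr rfl fun x _ => ?_
  split_ifs <;> simp

/-- Summing a pushforward over `T` is summing the original weight over the preimage of `T`. -/
theorem setSum_pushforward {α β : Type*} [Fintype α] [Fintype β] (f : α → β)
    (S : Set α) (T : Set β) (q : α → ℝ) :
    setSum T (fun b => setSum {a | a ∈ S ∧ f a = b} q) = setSum {a | a ∈ S ∧ f a ∈ T} q := by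
  have h : ∀ b, (if b ∈ T then setSum {a | a ∈ S ∧ f a = b} q else 0) =
      ∑ a, if f a = b then (if a ∈ S ∧ f a ∈ T then q a else 0) else 0 := by
    intro b
    by_cases hb : b ∈ T
    · simp only [hb, if_true, setSum, Set.mem_ofPred_eq]
      refine Finset.sum_congr rfl fun a _ => ?_
      by_cases hab : f a = b
      · simp [hab, hb]
      · simp [hab]
    · simp only [hb, if_false]
      refine (Finset.sum_eq_zero fun a _ => ?_).symm
      by_cases hab : f a = b
      · simp [hab, hb]
      · simp [hab]
  unfold setSum at h ⊢
  rw [Finset.sum_congr rfl fun b _ => h b, Finset.sum_comm]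
  refine Finset.sum_congr rfl fun a _ => ?_
  simp

namespace CausalGraph

variable {G : CausalGraph}

theorem mem_Rh_iff {h : G.Hyperarc} {r : G.Resp} : r ∈ G.Rh h ↔ r ∈ G.R ∧ G.FB r = h :=
  and_congr_right fun _ => funext_iff.symm

theorem FB_mem_H {r : G.Resp} (hr : r ∈ G.R) : G.FB r ∈ G.H :=
  ⟨r, mem_Rh_iff.2 ⟨hr, rfl⟩⟩

/-- Whether a response satisfies an observation depends only on its hyperarc. -/
theorem Rh_subset_RW_iff {Ob : G.Obs} {h : G.Hyperarc} {r : G.Resp} (hr : r ∈ G.Rh h) :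
    G.Rh h ⊆ G.RW Ob ↔ r ∈ G.RW Ob := by
  refine ⟨fun hs => hs hr, fun hW r' hr' => ⟨hr'.1, fun j hj => ?_⟩⟩
  rw [← hW.2 j hj]
  exact congrFun ((hr'.2 Ob.qA).trans (hr.2 Ob.qA).symm) ⟨j, Ob.W_sub j hj⟩

/-- Every valid hyperarc has a representative response that satisfies the query only if all
responses of the hyperarc do. -/
theorem exists_worst_response (Q : G.Query) {h : G.Hyperarc} (hh : h ∈ G.H) :
    ∃ r ∈ G.Rh h, (r ∈ G.RQ Q ↔ G.Rh h ⊆ G.RQ Q) := by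
  by_cases hs : G.Rh h ⊆ G.RQ Q
  · obtain ⟨r, hr⟩ := hh
    exact ⟨r, hr, iff_of_true (hs hr) hs⟩
  · obtain ⟨r, hr, hrQ⟩ := Set.not_subset.1 hs
    exact ⟨r, hr, iff_of_false hrQ hs⟩

/-- Aggregating a response weight over hyperarcs preserves the total weight of sets of hyperarcs. -/
theorem setSum_setSum_Rh (T : Set G.Hyperarc) (q : G.Resp → ℝ) :
    setSum T (fun h => setSum (G.Rh h) q) = setSum {r | r ∈ G.R ∧ G.FB r ∈ T} q := by
  rw [← setSum_pushforward]
  congr! 3 with h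
  ext r
  exact mem_Rh_iff

/-- A feasible point of the pruned program has a positive scaling factor. -/
theorem scale_pos {p : G.AAssign → G.BAssign → ℝ} {qh : G.Hyperarc → ℝ} {α : ℝ}
    {T : G.Hyperarc → Prop} (hα : 0 ≤ α) (hqh : ∀ h, 0 ≤ qh h)
    (hmarg : ∀ vA vB, setSum {h ∈ G.H | h vA = vB} qh = α * p vA vB)
    (hT : setSum {h ∈ G.H | T h} qh = 1) : 0 < α := by
  refine hα.lt_of_ne' fun h0 => ?_
  suffices setSum {h ∈ G.H | T h} qh = 0 by linarith
  refine Finset.sum_eq_zero fun h _ => ?_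
  split_ifs with hh
  · have hm := hmarg (fun _ => false) (h fun _ => false)
    rw [h0, zero_mul, setSum, Finset.sum_eq_zero_iff_of_nonneg
      fun x _ => by split_ifs <;> simp [hqh x]] at hm
    simpa [hh.1] using hm h (Finset.mem_univ h)
  · rfl

/-- Aggregating a feasible response weight over hyperarcs and normalizing gives a feasible point
of the pruned program with no larger objective value. -/
theorem exists_pruned_le {Q : G.Query} {Ob : G.Obs} {p : G.AAssign → G.BAssign → ℝ}
    {q : G.Resp → ℝ} (hq : ∀ r, 0 ≤ q r)
    (hmarg : ∀ vA vB, setSum (G.RvBvA vA vB) q = p vA vB) (hpos : 0 < setSum (G.RW Ob) q) :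
    ∃ (qh : G.Hyperarc → ℝ) (α : ℝ), 0 ≤ α ∧ (∀ h, 0 ≤ qh h) ∧
      (∀ vA vB, setSum {h ∈ G.H | h vA = vB} qh = α * p vA vB) ∧
      setSum {h ∈ G.H | G.Rh h ⊆ G.RW Ob} qh = 1 ∧
      setSum {h ∈ G.H | G.Rh h ⊆ G.RQ Q ∧ G.Rh h ⊆ G.RW Ob} qh ≤
        setSum (G.RQ Q ∩ G.RW Ob) q / setSum (G.RW Ob) q := by
  refine ⟨fun h => setSum (G.Rh h) q / setSum (G.RW Ob) q, (setSum (G.RW Ob) q)⁻¹,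
    (inv_pos.2 hpos).le, fun h => div_nonneg (setSum_nonneg _ hq) hpos.le, fun vA vB => ?_, ?_, ?_⟩
  · rw [setSum_div, setSum_setSum_Rh, ← hmarg, div_eq_inv_mul]
    congr 2
    ext r
    exact ⟨fun hr => ⟨hr.1, hr.2.2⟩, fun hr => ⟨hr.1, FB_mem_H hr.1, hr.2⟩⟩
  · rw [setSum_div, setSum_setSum_Rh, div_eq_one_iff_eq hpos.ne']
    congr 1
    ext r
    exact ⟨fun hr => hr.2.2 (mem_Rh_iff.2 ⟨hr.1, rfl⟩), fun hr => ⟨hr.1, FB_mem_H hr.1,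
      (Rh_subset_RW_iff (mem_Rh_iff.2 ⟨hr.1, rfl⟩)).2 hr⟩⟩
  · rw [setSum_div, setSum_setSum_Rh]
    refine div_le_div_of_nonneg_right (setSum_mono hq fun r hr => ?_) hpos.le
    have hmem := mem_Rh_iff.2 ⟨hr.1, rfl⟩
    exact ⟨hr.2.2.1 hmem, hr.2.2.2 hmem⟩

/-- Placing the weight of each hyperarc on a worst-case response turns a feasible point of the
pruned program into a feasible response weight with the same objective value. -/
theorem exists_response_eq {Q : G.Query} {Ob : G.Obs} {p : G.AAssign → G.BAssign → ℝ}
    {qh : G.Hyperarc → ℝ} {α : ℝ} (hα : 0 ≤ α) (hqh : ∀ h, 0 ≤ qh h)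
    (hmarg : ∀ vA vB, setSum {h ∈ G.H | h vA = vB} qh = α * p vA vB)
    (hW : setSum {h ∈ G.H | G.Rh h ⊆ G.RW Ob} qh = 1) :
    ∃ q : G.Resp → ℝ, (∀ r, 0 ≤ q r) ∧
      (∀ vA vB, setSum (G.RvBvA vA vB) q = p vA vB) ∧ 0 < setSum (G.RW Ob) q ∧
      setSum {h ∈ G.H | G.Rh h ⊆ G.RQ Q ∧ G.Rh h ⊆ G.RW Ob} qh =
        setSum (G.RQ Q ∩ G.RW Ob) q / setSum (G.RW Ob) q := by
  have hα' : 0 < α := scale_pos hα hqh hmarg hW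
  have hex : ∀ h : G.Hyperarc, ∃ r, h ∈ G.H → r ∈ G.Rh h ∧ (r ∈ G.RQ Q ↔ G.Rh h ⊆ G.RQ Q) := by
    intro h
    by_cases hh : h ∈ G.H
    · obtain ⟨r, hr⟩ := exists_worst_response Q hh
      exact ⟨r, fun _ => hr⟩
    · exact ⟨fun _ _ => false, fun hh' => absurd hh' hh⟩
  choose s hs using hex
  have hsum : ∀ X : Set G.Resp, setSum X (fun r => setSum {h | h ∈ G.H ∧ s h = r} qh / α) =
      setSum {h | h ∈ G.H ∧ s h ∈ X} qh / α := fun X => by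
    rw [setSum_div, setSum_pushforward]
  have hRW : setSum {h | h ∈ G.H ∧ s h ∈ G.RW Ob} qh = 1 := by
    rw [← hW]
    congr 1
    ext h
    exact and_congr_right fun hh => (Rh_subset_RW_iff (hs h hh).1).symm
  refine ⟨fun r => setSum {h | h ∈ G.H ∧ s h = r} qh / α,
    fun r => div_nonneg (setSum_nonneg _ hqh) hα, fun vA vB => ?_, ?_, ?_⟩
  · rw [hsum, div_eq_iff hα'.ne', mul_comm, ← hmarg]
    congr 1
    ext h
    refine and_congr_right fun hh => ?_
    have hFB := (hs h hh).1.2 vA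
    exact ⟨fun hr => hFB.symm.trans hr.2, fun hr => ⟨(hs h hh).1.1, hFB.trans hr⟩⟩
  · rw [hsum, hRW]
    positivity
  · rw [hsum, hsum, hRW, div_div_div_cancel_right₀ hα'.ne', div_one]
    congr 1
    ext h
    exact and_congr_right fun hh =>
      and_congr (hs h hh).2.symm (Rh_subset_RW_iff (hs h hh).1)

end CausalGraph

/-- Equivalence of the fractional lower-bound program and its
pruned linear reformulation: if the feasible set `F` is nonempty, then the
infimum over `q ∈ F` of `(Σ_{r∈R_Q∩R_W} q_r)/(Σ_{r∈R_W} q_r)` equals the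
optimal value of the pruned LP with objective coefficients
`d_h^L = 1{R_h ⊆ R_Q}·1{R_h ⊆ R_W}`. -/
theorem fractional_lower_equiv (G : CausalGraph) (Q : G.Query) (Ob : G.Obs)
    (hqA : Ob.qA = Q.qA)
    (p : G.AAssign → G.BAssign → ℝ)
    (hp : ∀ (vA : G.AAssign) (vB : G.BAssign), 0 ≤ p vA vB)
    (hp1 : ∀ vA : G.AAssign, ∑ vB : G.BAssign, p vA vB = 1)
    (hfeas : ∃ q : G.Resp → ℝ, (∀ r, 0 ≤ q r) ∧
      (∀ (vA : G.AAssign) (vB : G.BAssign), setSum (G.RvBvA vA vB) q = p vA vB) ∧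
      0 < setSum (G.RW Ob) q) :
    sInf {y : ℝ | ∃ q : G.Resp → ℝ, (∀ r, 0 ≤ q r) ∧
        (∀ (vA : G.AAssign) (vB : G.BAssign), setSum (G.RvBvA vA vB) q = p vA vB) ∧
        0 < setSum (G.RW Ob) q ∧
        y = setSum (G.RQ Q ∩ G.RW Ob) q / setSum (G.RW Ob) q} =
    sInf {y : ℝ | ∃ (qh : G.Hyperarc → ℝ) (α : ℝ), 0 ≤ α ∧ (∀ h, 0 ≤ qh h) ∧
        (∀ (vA : G.AAssign) (vB : G.BAssign),
          setSum {h ∈ G.H | h vA = vB} qh = α * p vA vB) ∧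
        setSum {h ∈ G.H | G.Rh h ⊆ G.RW Ob} qh = 1 ∧
        y = setSum {h ∈ G.H | G.Rh h ⊆ G.RQ Q ∧ G.Rh h ⊆ G.RW Ob} qh} := by
  obtain ⟨q₀, hq₀, hmarg₀, hpos₀⟩ := hfeas
  obtain ⟨qh₀, α₀, hα₀, hqh₀, hm₀, hW₀, -⟩ := exists_pruned_le (Q := Q) hq₀ hmarg₀ hpos₀
  apply le_antisymm
  · refine csInf_le_csInf ⟨0, ?_⟩ ⟨_, qh₀, α₀, hα₀, hqh₀, hm₀, hW₀, rfl⟩ ?_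
    · rintro y ⟨q, hq, -, hpos, rfl⟩
      exact div_nonneg (setSum_nonneg _ hq) hpos.le
    · rintro y ⟨qh, α, hα, hqh, hm, hW, rfl⟩
      exact exists_response_eq hα hqh hm hW
  · refine le_csInf ⟨_, q₀, hq₀, hmarg₀, hpos₀, rfl⟩ ?_
    rintro y ⟨q, hq, hmarg, hpos, rfl⟩
    obtain ⟨qh, α, hα, hqh, hm, hW, hle⟩ := exists_pruned_le (Q := Q) hq hmarg hpos
    refine csInf_le_of_le ⟨0, ?_⟩ ⟨qh, α, hα, hqh, hm, hW, rfl⟩ hle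
    rintro y ⟨qh, α, -, hqh, -, -, rfl⟩
    exact setSum_nonneg _ hqh
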